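/- For every $k \ge 0$ and $d \ge 1$: if there exists a finite acute set of cardinality $n \ge 1$ in $\mathbb{R}^d$, then there exists a finite acute set of cardinality $2^k n$ in $\mathbb{R}^{d+2k}$. -/

import Mathlib

open RealInnerProductSpace

/-- A finite set of points in a real inner product space is *acute* if any three
distinct points of it form an acute angle. -/
def IsAcuteSet {E : Type*} [NormedAddCommGroup E] [InnerProductSpace ℝ E]
    (X : Finset E) : Prop :=
  ∀ x ∈ X, ∀ y ∈ X, ∀ z ∈ X, y ≠ x → z ≠ x → y ≠ z → 0 < ⟪y - x, z - x⟫

/-!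
Replace every point `x` of an acute set in `E` by the two points `(x, ± v x)` of `E × F`, where the
vectors `v x` lie on a small sphere of `F` and no two of them are equal or opposite; this needs
`F` to have dimension at least two. At a vertex `(x, a)`, an angle whose sides lead to points over
two further points of `X` is a small perturbation of an acute angle. If one side leads to the twin
`(x, -a)`, the inner product is `⟪-a - a, b - a⟫ = ‖b - a‖ ^ 2 > 0` for some `b ≠ a` on the same
sphere.
-/

open Module Metric

section InnerProductGeometry

variable {F : Type*} [NormedAddCommGroup F] [InnerProductSpace ℝ F]

lemma inner_neg_sub_self_sub_of_norm_eq {a b : F} (h : ‖a‖ = ‖b‖) :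
    ⟪-a - a, b - a⟫ = ‖b - a‖ ^ 2 := by
  rw [norm_sub_sq_real, ← h, inner_sub_left, inner_sub_right, inner_sub_right, inner_neg_left,
    inner_neg_left, real_inner_self_eq_norm_sq, real_inner_comm a b]
  ring

lemma neg_four_mul_sq_le_inner_sub_sub {a b c : F} {r : ℝ} (ha : ‖a‖ ≤ r) (hb : ‖b‖ ≤ r)
    (hc : ‖c‖ ≤ r) : -(4 * r ^ 2) ≤ ⟪b - a, c - a⟫ := by
  have hba : ‖b - a‖ ≤ 2 * r := by linarith [norm_sub_le b a]
  have hca : ‖c - a‖ ≤ 2 * r := by linarith [norm_sub_le c a]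
  calc -(4 * r ^ 2) = -((2 * r) * (2 * r)) := by ring
    _ ≤ -(‖b - a‖ * ‖c - a‖) := by gcongr; exact (norm_nonneg _).trans hba
    _ ≤ ⟪b - a, c - a⟫ := neg_le_of_abs_le (abs_real_inner_le_norm _ _)

lemma infinite_sphere_inter_inner_pos (hF : 1 < Module.rank ℝ F) {e : F} (he : e ≠ 0) :
    (sphere (0 : F) ‖e‖ ∩ {v | 0 < ⟪e, v⟫}).Infinite := by
  have hIcc : Set.Icc ⟪e, -e⟫ ⟪e, e⟫ ⊆ (fun v => ⟪e, v⟫) '' sphere (0 : F) ‖e‖ :=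
    (isPreconnected_sphere hF 0 ‖e‖).intermediate_value (by simp) (by simp) (by fun_prop)
  have hpos : 0 < ⟪e, e⟫ := real_inner_self_pos.2 he
  refine Set.Infinite.of_image (fun v => ⟪e, v⟫) ((Set.Ioc_infinite hpos).mono ?_)
  intro t ht
  have hneg : ⟪e, -e⟫ ≤ t := by rw [inner_neg_right]; linarith [ht.1]
  obtain ⟨v, hv, rfl⟩ := hIcc ⟨hneg, ht.2⟩
  exact ⟨v, ⟨hv, ht.1⟩, rfl⟩

lemma exists_norm_eq_pairwise_ne_and_ne_neg {α : Type*} (hF : 1 < Module.rank ℝ F) {r : ℝ}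
    (hr : 0 < r) {s : Set α} (hs : s.Finite) :
    ∃ v : α → F, (∀ x ∈ s, ‖v x‖ = r) ∧ s.Pairwise fun x y => v x ≠ v y ∧ v x ≠ -v y := by
  have : Nontrivial F := rank_pos_iff_nontrivial.1 (zero_lt_one.trans hF)
  obtain ⟨e, rfl⟩ := exists_norm_eq F hr.le
  have hinf := infinite_sphere_inter_inner_pos hF (norm_pos_iff.1 hr)
  obtain ⟨v, hv, hinj⟩ := hs.exists_injOn_of_encard_le (hinf.encard_eq ▸ le_top)
  refine ⟨v, fun x hx => mem_sphere_zero_iff_norm.1 (hv hx).1, fun x hx y hy hxy =>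
    ⟨hinj.ne hx hy hxy, fun h => ?_⟩⟩
  have hx_pos : 0 < ⟪e, v x⟫ := (hv hx).2
  have hy_pos : 0 < ⟪e, v y⟫ := (hv hy).2
  rw [h, inner_neg_right] at hx_pos
  linarith

end InnerProductGeometry

lemma nonempty_linearIsometry_of_finrank_le {𝕜 E F : Type*} [RCLike 𝕜]
    [NormedAddCommGroup E] [InnerProductSpace 𝕜 E] [FiniteDimensional 𝕜 E]
    [NormedAddCommGroup F] [InnerProductSpace 𝕜 F] (h : finrank 𝕜 E ≤ finrank 𝕜 F) :
    Nonempty (E →ₗᵢ[𝕜] F) := by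
  obtain ⟨f, hf⟩ := exists_linearIndependent_of_le_finrank h
  let b := stdOrthonormalBasis 𝕜 E
  let w := InnerProductSpace.gramSchmidtNormed 𝕜 f
  have hw : Orthonormal 𝕜 w := InnerProductSpace.gramSchmidtNormed_orthonormal hf
  have hb : Orthonormal 𝕜 b.toBasis := by simpa only [b.coe_toBasis] using b.orthonormal
  have hconstr : Orthonormal 𝕜 (b.toBasis.constr 𝕜 w ∘ b.toBasis) := by
    rwa [show b.toBasis.constr 𝕜 w ∘ b.toBasis = w from
      funext fun i => b.toBasis.constr_basis 𝕜 w i]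
  exact ⟨(b.toBasis.constr 𝕜 w).isometryOfOrthonormal hb hconstr⟩

section AcuteSet

variable {E F : Type*} [NormedAddCommGroup E] [InnerProductSpace ℝ E]
  [NormedAddCommGroup F] [InnerProductSpace ℝ F] {X : Finset E}

namespace IsAcuteSet

lemma map (hX : IsAcuteSet X) (f : E →ₗᵢ[ℝ] F) :
    IsAcuteSet (X.map ⟨f, f.injective⟩) := by
  simp only [IsAcuteSet, Finset.forall_mem_map, Function.Embedding.coeFn_mk, ← map_sub,
    f.inner_map_map, f.injective.ne_iff]
  exact hX

lemma inner_sub_sub_pos (hX : IsAcuteSet X) {x y z : E} (hx : x ∈ X) (hy : y ∈ X) (hz : z ∈ X)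
    (hyx : y ≠ x) (hzx : z ≠ x) : 0 < ⟪y - x, z - x⟫ := by
  obtain rfl | hyz := eq_or_ne y z
  · exact real_inner_self_pos.2 (sub_ne_zero.2 hyx)
  · exact hX x hx y hy z hz hyx hzx hyz

lemma exists_pos_forall_lt_inner (hX : IsAcuteSet X) :
    ∃ δ > 0, ∀ x ∈ X, ∀ y ∈ X, ∀ z ∈ X, y ≠ x → z ≠ x → δ < ⟪y - x, z - x⟫ := by
  classical
  let T := {t ∈ X ×ˢ X ×ˢ X | t.2.1 ≠ t.1 ∧ t.2.2 ≠ t.1}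
  have hT : ∀ t ∈ T, 0 < ⟪t.2.1 - t.1, t.2.2 - t.1⟫ := by
    simp only [T, Finset.mem_filter, Finset.mem_product]
    exact fun t ⟨⟨hx, hy, hz⟩, hyx, hzx⟩ => hX.inner_sub_sub_pos hx hy hz hyx hzx
  obtain ⟨δ, hδ, hlt⟩ := Order.exists_between_finsets {(0 : ℝ)}
    (T.image fun t => ⟪t.2.1 - t.1, t.2.2 - t.1⟫) (by
      simpa only [Finset.mem_singleton, forall_eq, Finset.forall_mem_image] using hT)
  refine ⟨δ, hδ 0 (Finset.mem_singleton_self 0), fun x hx y hy z hz hyx hzx =>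
    hlt _ (Finset.mem_image_of_mem _ (?_ : (x, y, z) ∈ T))⟩
  simp only [T, Finset.mem_filter, Finset.mem_product]
  exact ⟨⟨hx, hy, hz⟩, hyx, hzx⟩

end IsAcuteSet

end AcuteSet

section Doubling

variable {E F : Type*} [AddGroup F] {X : Finset E}

open scoped Classical in
/-- The antipodal doubling of `X` along `v`: every `x ∈ X` is replaced by the two points
`(x, v x)` and `(x, -v x)` of the `L²` product. -/
noncomputable def antipodalDoubling (X : Finset E) (v : E → F) : Finset (WithLp 2 (E × F)) :=
  X.image (fun x => WithLp.toLp 2 (x, v x)) ∪ X.image (fun x => WithLp.toLp 2 (x, -v x))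

namespace antipodalDoubling

variable {v : E → F} {p q t : WithLp 2 (E × F)}

lemma mem_iff : p ∈ antipodalDoubling X v ↔
    p.fst ∈ X ∧ (p.snd = v p.fst ∨ p.snd = -v p.fst) := by
  simp only [antipodalDoubling, Finset.mem_union, Finset.mem_image]
  constructor
  · rintro (⟨x, hx, rfl⟩ | ⟨x, hx, rfl⟩)
    exacts [⟨hx, .inl rfl⟩, ⟨hx, .inr rfl⟩]
  · rintro ⟨hp, h | h⟩
    exacts [.inl ⟨p.fst, hp, by rw [← h]; rfl⟩, .inr ⟨p.fst, hp, by rw [← h]; rfl⟩]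

lemma snd_eq_neg_of_fst_eq (hp : p ∈ antipodalDoubling X v) (hq : q ∈ antipodalDoubling X v)
    (hqp : q ≠ p) (hfst : q.fst = p.fst) : q.snd = -p.snd := by
  have hsnd : q.snd ≠ p.snd := fun h => hqp (WithLp.ofLp_injective 2 (Prod.ext hfst h))
  obtain ⟨-, hp⟩ := mem_iff.1 hp
  obtain ⟨-, hq⟩ := mem_iff.1 hq
  rw [hfst] at hq
  rcases hp with hp | hp <;> rcases hq with hq | hq
  · exact absurd (hq.trans hp.symm) hsnd
  · rw [hq, hp]
  · rw [hq, hp, neg_neg]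
  · exact absurd (hq.trans hp.symm) hsnd

lemma snd_ne_snd (hv : (X : Set E).Pairwise fun x y => v x ≠ v y ∧ v x ≠ -v y)
    (hp : p ∈ antipodalDoubling X v) (hq : q ∈ antipodalDoubling X v) (hfst : q.fst ≠ p.fst) :
    q.snd ≠ p.snd := by
  obtain ⟨hpX, hp⟩ := mem_iff.1 hp
  obtain ⟨hqX, hq⟩ := mem_iff.1 hq
  obtain ⟨hne, hne_neg⟩ := hv hqX hpX hfst
  rcases hp with hp | hp <;> rcases hq with hq | hq <;> rw [hp, hq]
  exacts [hne, fun h => hne_neg (neg_eq_iff_eq_neg.1 h), hne_neg, neg_injective.ne hne]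

lemma card_eq [IsAddTorsionFree F] (hv : ∀ x ∈ X, v x ≠ 0) :
    (antipodalDoubling X v).card = 2 * X.card := by
  classical
  have hinj (w : E → F) : Function.Injective fun x => WithLp.toLp 2 (x, w x) :=
    fun x y h => congrArg (fun p : WithLp 2 (E × F) => p.fst) h
  rw [antipodalDoubling, Finset.card_union_of_disjoint, Finset.card_image_of_injective _ (hinj v),
    Finset.card_image_of_injective _ (hinj fun x => -v x), two_mul]
  simp only [Finset.disjoint_left, Finset.mem_image]
  rintro _ ⟨x, hx, rfl⟩ ⟨y, -, h⟩
  obtain rfl : y = x := congrArg (fun p : WithLp 2 (E × F) => p.fst) h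
  have hneg : -v y = v y := congrArg (fun p : WithLp 2 (E × F) => p.snd) h
  exact hv y hx (neg_eq_self.1 hneg)

end antipodalDoubling

end Doubling

section DoublingAcute

namespace antipodalDoubling

lemma norm_snd {E F : Type*} [SeminormedAddGroup F] {X : Finset E} {v : E → F}
    {p : WithLp 2 (E × F)} {r : ℝ} (hr : ∀ x ∈ X, ‖v x‖ = r)
    (hp : p ∈ antipodalDoubling X v) : ‖p.snd‖ = r := by
  obtain ⟨hpX, h | h⟩ := mem_iff.1 hp
  · rw [h, hr _ hpX]
  · rw [h, norm_neg, hr _ hpX]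

variable {E F : Type*} [NormedAddCommGroup E] [InnerProductSpace ℝ E]
  [NormedAddCommGroup F] [InnerProductSpace ℝ F] {X : Finset E} {v : E → F}
  {p q t : WithLp 2 (E × F)} {r : ℝ}

lemma inner_sub_sub_pos_of_fst_eq (hr : ∀ x ∈ X, ‖v x‖ = r)
    (hv : (X : Set E).Pairwise fun x y => v x ≠ v y ∧ v x ≠ -v y)
    (hp : p ∈ antipodalDoubling X v) (hq : q ∈ antipodalDoubling X v)
    (ht : t ∈ antipodalDoubling X v) (hqp : q ≠ p) (hfst : q.fst = p.fst) (htp : t.fst ≠ p.fst) :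
    0 < ⟪q - p, t - p⟫ := by
  have hnorm : ‖p.snd‖ = ‖t.snd‖ := by rw [norm_snd hr hp, norm_snd hr ht]
  have hinner : ⟪q - p, t - p⟫ = ‖t.snd - p.snd‖ ^ 2 := calc
    ⟪q - p, t - p⟫ = ⟪q.fst - p.fst, t.fst - p.fst⟫ + ⟪q.snd - p.snd, t.snd - p.snd⟫ := rfl
    _ = ⟪-p.snd - p.snd, t.snd - p.snd⟫ := by
      rw [hfst, sub_self, inner_zero_left, zero_add, snd_eq_neg_of_fst_eq hp hq hqp hfst]
    _ = ‖t.snd - p.snd‖ ^ 2 := inner_neg_sub_self_sub_of_norm_eq hnorm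
  have hsnd : t.snd - p.snd ≠ 0 := sub_ne_zero.2 (snd_ne_snd hv hp ht htp)
  rw [hinner]
  positivity

lemma isAcuteSet (hr : ∀ x ∈ X, ‖v x‖ = r)
    (hv : (X : Set E).Pairwise fun x y => v x ≠ v y ∧ v x ≠ -v y)
    (hX : ∀ x ∈ X, ∀ y ∈ X, ∀ z ∈ X, y ≠ x → z ≠ x → 4 * r ^ 2 < ⟪y - x, z - x⟫) :
    IsAcuteSet (antipodalDoubling X v) := by
  intro p hp q hq t ht hqp htp hqt
  by_cases hqp' : q.fst = p.fst
  · refine inner_sub_sub_pos_of_fst_eq hr hv hp hq ht hqp hqp' fun htp' => hqt ?_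
    exact WithLp.ofLp_injective 2 (Prod.ext (hqp'.trans htp'.symm)
      ((snd_eq_neg_of_fst_eq hp hq hqp hqp').trans (snd_eq_neg_of_fst_eq hp ht htp htp').symm))
  by_cases htp' : t.fst = p.fst
  · rw [real_inner_comm]
    exact inner_sub_sub_pos_of_fst_eq hr hv hp ht hq htp htp' hqp'
  have hfst : 4 * r ^ 2 < ⟪q.fst - p.fst, t.fst - p.fst⟫ :=
    hX _ (mem_iff.1 hp).1 _ (mem_iff.1 hq).1 _ (mem_iff.1 ht).1 hqp' htp'
  have hsnd : -(4 * r ^ 2) ≤ ⟪q.snd - p.snd, t.snd - p.snd⟫ :=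
    neg_four_mul_sq_le_inner_sub_sub (norm_snd hr hp).le (norm_snd hr hq).le (norm_snd hr ht).le
  calc (0 : ℝ) < ⟪q.fst - p.fst, t.fst - p.fst⟫ + ⟪q.snd - p.snd, t.snd - p.snd⟫ := by linarith
    _ = ⟪q - p, t - p⟫ := rfl

end antipodalDoubling

end DoublingAcute

section Iteration

variable {E F : Type*} [NormedAddCommGroup E] [InnerProductSpace ℝ E]
  [NormedAddCommGroup F] [InnerProductSpace ℝ F] {X : Finset E}

lemma IsAcuteSet.exists_prod_card_eq_two_mul (hF : 1 < Module.rank ℝ F) (hX : IsAcuteSet X) :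
    ∃ Y : Finset (WithLp 2 (E × F)), IsAcuteSet Y ∧ Y.card = 2 * X.card := by
  obtain ⟨δ, hδ, hgap⟩ := hX.exists_pos_forall_lt_inner
  have hr : 0 < √δ / 2 := by positivity
  have hδ_eq : 4 * (√δ / 2) ^ 2 = δ := by rw [div_pow, Real.sq_sqrt hδ.le]; ring
  have : IsAddTorsionFree F := .of_isTorsionFree ℝ F
  obtain ⟨v, hnorm, hv⟩ := exists_norm_eq_pairwise_ne_and_ne_neg hF hr X.finite_toSet
  exact ⟨antipodalDoubling X v, antipodalDoubling.isAcuteSet hnorm hv (by rwa [hδ_eq]),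
    antipodalDoubling.card_eq fun x hx => norm_pos_iff.1 (hnorm x hx ▸ hr)⟩

theorem acute_set_iterate_general [FiniteDimensional ℝ E] (k : ℕ)
    (hEF : finrank ℝ E + 2 * k ≤ finrank ℝ F) (hX : IsAcuteSet X) :
    ∃ Y : Finset F, IsAcuteSet Y ∧ Y.card = 2 ^ k * X.card := by
  induction k generalizing E with
  | zero =>
    obtain ⟨f⟩ := nonempty_linearIsometry_of_finrank_le hEF
    exact ⟨_, hX.map f, by simp⟩
  | succ k ih =>
    have hplane : 1 < Module.rank ℝ (EuclideanSpace ℝ (Fin 2)) := by simp [← finrank_eq_rank]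
    obtain ⟨Y, hY, hYX⟩ := hX.exists_prod_card_eq_two_mul hplane
    have hfinrank : finrank ℝ (WithLp 2 (E × EuclideanSpace ℝ (Fin 2))) = finrank ℝ E + 2 := by
      rw [(WithLp.linearEquiv 2 ℝ _).finrank_eq, finrank_prod, finrank_euclideanSpace_fin]
    obtain ⟨Z, hZ, hZY⟩ := ih (by linarith) hY
    exact ⟨Z, hZ, by rw [hZY, hYX, pow_succ, mul_assoc]⟩

end Iteration

theorem acute_set_iterate (k d n : ℕ) (hd : 1 ≤ d) (hn : 1 ≤ n)
    (h : ∃ X : Finset (EuclideanSpace ℝ (Fin d)), IsAcuteSet X ∧ X.card = n) :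
    ∃ Y : Finset (EuclideanSpace ℝ (Fin (d + 2 * k))),
      IsAcuteSet Y ∧ Y.card = 2 ^ k * n := by
  obtain ⟨X, hX, rfl⟩ := h
  exact acute_set_iterate_general k (by simp only [finrank_euclideanSpace_fin, le_refl]) hX
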